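/- In the tied braid monoid TB_n^B of type B, the ties induce a transitive (hence equivalence) relation on the strands; concretely: for all pairwise distinct i, k, m ∈ {1, …, n}, η_{i,k} η_{k,m} η_{i,m} = η_{i,k} η_{k,m}; and for all i ≠ j in {1, …, n}, φ_i φ_j η_{i,j} = φ_i φ_j and η_{i,j} φ_i φ_j = η_{i,j} φ_i (so the redundant tie implied by transitivity can be absorbed). -/

import Mathlib

/-! The tied braid monoid of type B, `TBₙᴮ`, presented by generators and relations. -/

/-- Generators of the tied braid monoid of type B on `n` (moving) strands:
`sig i` is `σ_{i+1}`, `sigInv i` is `σ_{i+1}⁻¹`, `rho` is `ρ₁`, `rhoInv` is `ρ₁⁻¹`,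
`phi` is `φ₁` and `eta i` is `η_{i+1}` (for `i : Fin (n-1)`). -/
inductive TBGen (n : ℕ) : Type
  | sig : Fin (n - 1) → TBGen n
  | sigInv : Fin (n - 1) → TBGen n
  | rho : TBGen n
  | rhoInv : TBGen n
  | phi : TBGen n
  | eta : Fin (n - 1) → TBGen n

namespace TiedBraidB

variable (n : ℕ)

/-- The word `σᵢ` (for `1 ≤ i ≤ n-1`; junk value `1` otherwise). -/
def wσ (i : ℕ) : FreeMonoid (TBGen n) :=
  if h : 1 ≤ i ∧ i ≤ n - 1 then FreeMonoid.of (TBGen.sig ⟨i - 1, by omega⟩) else 1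

/-- The word `σᵢ⁻¹`. -/
def wσi (i : ℕ) : FreeMonoid (TBGen n) :=
  if h : 1 ≤ i ∧ i ≤ n - 1 then FreeMonoid.of (TBGen.sigInv ⟨i - 1, by omega⟩) else 1

/-- The word `ηᵢ`. -/
def wη (i : ℕ) : FreeMonoid (TBGen n) :=
  if h : 1 ≤ i ∧ i ≤ n - 1 then FreeMonoid.of (TBGen.eta ⟨i - 1, by omega⟩) else 1

/-- The word `ρ₁`. -/
def wρ : FreeMonoid (TBGen n) := FreeMonoid.of TBGen.rho

/-- The word `ρ₁⁻¹`. -/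
def wρi : FreeMonoid (TBGen n) := FreeMonoid.of TBGen.rhoInv

/-- The word `φ₁`. -/
def wφ : FreeMonoid (TBGen n) := FreeMonoid.of TBGen.phi

/-- The descending word `σₖ σₖ₋₁ ⋯ σ₁`. -/
def wσDesc : ℕ → FreeMonoid (TBGen n)
  | 0 => 1
  | k + 1 => wσ n (k + 1) * wσDesc k

/-- The ascending word `σ₁ σ₂ ⋯ σₖ`. -/
def wσAsc : ℕ → FreeMonoid (TBGen n)
  | 0 => 1
  | k + 1 => wσAsc k * wσ n (k + 1)

/-- The descending word `σₖ⁻¹ σₖ₋₁⁻¹ ⋯ σ₁⁻¹`. -/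
def wσiDesc : ℕ → FreeMonoid (TBGen n)
  | 0 => 1
  | k + 1 => wσi n (k + 1) * wσiDesc k

/-- The ascending word `σ₁⁻¹ σ₂⁻¹ ⋯ σₖ⁻¹`. -/
def wσiAsc : ℕ → FreeMonoid (TBGen n)
  | 0 => 1
  | k + 1 => wσiAsc k * wσi n (k + 1)

/-- The defining relations of the tied braid monoid `TBₙᴮ` of type B. -/
inductive tbRel : FreeMonoid (TBGen n) → FreeMonoid (TBGen n) → Prop
  | sig_inv (i : ℕ) (h1 : 1 ≤ i) (h2 : i ≤ n - 1) :
      tbRel (wσ n i * wσi n i) 1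
  | inv_sig (i : ℕ) (h1 : 1 ≤ i) (h2 : i ≤ n - 1) :
      tbRel (wσi n i * wσ n i) 1
  | rho_inv : tbRel (wρ n * wρi n) 1
  | inv_rho : tbRel (wρi n * wρ n) 1
  | sig_comm (i j : ℕ) (h1 : 1 ≤ i) (h2 : i + 1 < j) (h3 : j ≤ n - 1) :
      tbRel (wσ n i * wσ n j) (wσ n j * wσ n i)
  | sig_braid (i : ℕ) (h1 : 1 ≤ i) (h2 : i + 1 ≤ n - 1) :
      tbRel (wσ n i * wσ n (i + 1) * wσ n i) (wσ n (i + 1) * wσ n i * wσ n (i + 1))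
  | rho_sig (i : ℕ) (h1 : 2 ≤ i) (h2 : i ≤ n - 1) :
      tbRel (wρ n * wσ n i) (wσ n i * wρ n)
  | rho_sig_rho_sig (h : 2 ≤ n) :
      tbRel (wρ n * wσ n 1 * wρ n * wσ n 1) (wσ n 1 * wρ n * wσ n 1 * wρ n)
  | eta_comm (i j : ℕ) (h1 : 1 ≤ i) (h2 : i ≤ n - 1) (h3 : 1 ≤ j) (h4 : j ≤ n - 1) :
      tbRel (wη n i * wη n j) (wη n j * wη n i)
  | eta_sig (i : ℕ) (h1 : 1 ≤ i) (h2 : i ≤ n - 1) :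
      tbRel (wη n i * wσ n i) (wσ n i * wη n i)
  | eta_sig_far (i j : ℕ) (h1 : 1 ≤ i) (h2 : i ≤ n - 1) (h3 : 1 ≤ j) (h4 : j ≤ n - 1)
      (h5 : i + 1 < j ∨ j + 1 < i) :
      tbRel (wη n i * wσ n j) (wσ n j * wη n i)
  | eta_sig_sig (i j : ℕ) (h1 : 1 ≤ i) (h2 : i ≤ n - 1) (h3 : 1 ≤ j) (h4 : j ≤ n - 1)
      (h5 : j = i + 1 ∨ i = j + 1) :
      tbRel (wη n i * wσ n j * wσ n i) (wσ n j * wσ n i * wη n j)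
  | eta_sig_sigInv (i j : ℕ) (h1 : 1 ≤ i) (h2 : i ≤ n - 1) (h3 : 1 ≤ j) (h4 : j ≤ n - 1)
      (h5 : j = i + 1 ∨ i = j + 1) :
      tbRel (wη n i * wσ n j * wσi n i) (wσ n j * wσi n i * wη n j)
  | eta_eta_sig (i j : ℕ) (h1 : 1 ≤ i) (h2 : i ≤ n - 1) (h3 : 1 ≤ j) (h4 : j ≤ n - 1)
      (h5 : j = i + 1 ∨ i = j + 1) :
      tbRel (wη n i * wη n j * wσ n i) (wσ n i * wη n i * wη n j)
  | eta_eta_sig' (i j : ℕ) (h1 : 1 ≤ i) (h2 : i ≤ n - 1) (h3 : 1 ≤ j) (h4 : j ≤ n - 1)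
      (h5 : j = i + 1 ∨ i = j + 1) :
      tbRel (wη n i * wη n j * wσ n i) (wη n j * wσ n i * wη n j)
  | eta_idem (i : ℕ) (h1 : 1 ≤ i) (h2 : i ≤ n - 1) :
      tbRel (wη n i * wη n i) (wη n i)
  | phi_idem : tbRel (wφ n * wφ n) (wφ n)
  | rho_eta (i : ℕ) (h1 : 1 ≤ i) (h2 : i ≤ n - 1) :
      tbRel (wρ n * wη n i) (wη n i * wρ n)
  | rho_phi : tbRel (wρ n * wφ n) (wφ n * wρ n)
  | phi_eta (i : ℕ) (h1 : 1 ≤ i) (h2 : i ≤ n - 1) :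
      tbRel (wφ n * wη n i) (wη n i * wφ n)
  | phi_sig (i : ℕ) (h1 : 2 ≤ i) (h2 : i ≤ n - 1) :
      tbRel (wφ n * wσ n i) (wσ n i * wφ n)
  | phi_move (i : ℕ) (h1 : 2 ≤ i) (h2 : i ≤ n) :
      tbRel (wσDesc n (i - 1) * wφ n * wσiAsc n (i - 1))
        (wσiDesc n (i - 1) * wφ n * wσAsc n (i - 1))
  | phi_eta_one (h : 2 ≤ n) :
      tbRel (wφ n * wη n 1) (wφ n * wσ n 1 * wφ n * wσi n 1)
  | phi_eta_one' (h : 2 ≤ n) :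
      tbRel (wφ n * wσ n 1 * wφ n * wσi n 1) (wσ n 1 * wφ n * wσi n 1 * wη n 1)

/-- The tied braid monoid of type B on `n` strands. -/
def TB : Type := (conGen (tbRel n)).Quotient

instance : Monoid (TB n) := inferInstanceAs (Monoid (conGen (tbRel n)).Quotient)

/-- The canonical projection from the free monoid on the generators onto `TBₙᴮ`. -/
def mk : FreeMonoid (TBGen n) →* TB n := Con.mk' _

/-- The generator `σᵢ` of `TBₙᴮ`. -/
def σB (i : ℕ) : TB n := mk n (wσ n i)

/-- The generator `σᵢ⁻¹` of `TBₙᴮ`. -/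
def σiB (i : ℕ) : TB n := mk n (wσi n i)

/-- The generator `ρ₁` of `TBₙᴮ`. -/
def ρB : TB n := mk n (wρ n)

/-- The generator `ρ₁⁻¹` of `TBₙᴮ`. -/
def ρiB : TB n := mk n (wρi n)

/-- The generator `φ₁` of `TBₙᴮ`. -/
def φB : TB n := mk n (wφ n)

/-- The generator `ηᵢ` of `TBₙᴮ`. -/
def ηB (i : ℕ) : TB n := mk n (wη n i)

/-- The word `σᵢ σᵢ₊₁ ⋯ σₖ` (empty if `k < i`). -/
def wσRange (i k : ℕ) : FreeMonoid (TBGen n) :=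
  ((List.range' i (k + 1 - i)).map (wσ n)).prod

/-- The word `σₖ⁻¹ σₖ₋₁⁻¹ ⋯ σᵢ⁻¹` (empty if `k < i`). -/
def wσiRangeRev (i k : ℕ) : FreeMonoid (TBGen n) :=
  ((List.range' i (k + 1 - i)).reverse.map (wσi n)).prod

/-- The word representing the generalized tie `η_{i,j}`:
`σᵢ ⋯ σ_{j-2} η_{j-1} σ_{j-2}⁻¹ ⋯ σᵢ⁻¹` for `i < j`, with the conventions
`η_{i,i} = 1` and `η_{j,i} = η_{i,j}`. -/
def wηg (i j : ℕ) : FreeMonoid (TBGen n) :=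
  if i = j then 1
  else wσRange n (min i j) (max i j - 2) * wη n (max i j - 1) *
    wσiRangeRev n (min i j) (max i j - 2)

/-- The word representing the generalized tie `φⱼ = σ_{j-1} ⋯ σ₁ φ₁ σ₁⁻¹ ⋯ σ_{j-1}⁻¹`. -/
def wφg (j : ℕ) : FreeMonoid (TBGen n) :=
  wσDesc n (j - 1) * wφ n * wσiAsc n (j - 1)

/-- The generalized tie `η_{i,j}` joining the `i`-th and `j`-th moving strands. -/
def ηg (i j : ℕ) : TB n := mk n (wηg n i j)

/-- The generalized tie `φⱼ` joining the fixed strand and the `j`-th moving strand. -/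
def φg (j : ℕ) : TB n := mk n (wφg n j)

end TiedBraidB

/-!
Conjugation by the invertible elements `σₖ` permutes the ties: `σₖ` carries `η_{i,j}` and `φⱼ` to
the ties obtained by exchanging the labels `k` and `k + 1`. Since adjacent transpositions generate
the symmetric group, any distinct strands can be moved to `1, 2, 3` by a conjugation that carries
ties to ties, and on these strands the identities follow directly from the defining relations.
-/

namespace TiedBraidB

open Equiv (swap swap_apply_left swap_apply_right swap_apply_of_ne_of_ne)

theorem toConjAct_smul_eq_iff {M : Type*} [Monoid M] {u : Mˣ} {x y : M} :
    ConjAct.toConjAct u • x = y ↔ u * x = y * u := by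
  rw [ConjAct.units_smul_def, ConjAct.ofConjAct_toConjAct, Units.mul_inv_eq_iff_eq_mul]

section Generators

theorem mk_eq_mk_of_tbRel {n : ℕ} {v w : FreeMonoid (TBGen n)} (h : tbRel n v w) :
    mk n v = mk n w :=
  (Con.eq _).2 (ConGen.Rel.of _ _ h)

theorem σB_mul_σiB (n k : ℕ) : σB n k * σiB n k = 1 := by
  by_cases hk : 1 ≤ k ∧ k ≤ n - 1
  · exact mk_eq_mk_of_tbRel (tbRel.sig_inv k hk.1 hk.2)
  · simp [σB, σiB, wσ, wσi, hk]

theorem σiB_mul_σB (n k : ℕ) : σiB n k * σB n k = 1 := by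
  by_cases hk : 1 ≤ k ∧ k ≤ n - 1
  · exact mk_eq_mk_of_tbRel (tbRel.inv_sig k hk.1 hk.2)
  · simp [σB, σiB, wσ, wσi, hk]

/-- The generator `σₖ` as an invertible element of `TBₙᴮ`, with inverse `σₖ⁻¹`. As for `σB`, it is
`1` unless `1 ≤ k < n`. -/
def σUnit (n k : ℕ) : (TB n)ˣ := ⟨σB n k, σiB n k, σB_mul_σiB n k, σiB_mul_σB n k⟩

/-- Conjugation by `σₖ`, as an element of the group acting on `TBₙᴮ` by conjugation, so that
`σConj n k • x = σₖ x σₖ⁻¹`. -/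
def σConj (n k : ℕ) : ConjAct (TB n)ˣ := ConjAct.toConjAct (σUnit n k)

variable {n i j k : ℕ}

theorem σConj_smul (k : ℕ) (x : TB n) : σConj n k • x = σB n k * x * σiB n k := rfl

theorem σConj_inv_smul (k : ℕ) (x : TB n) : (σConj n k)⁻¹ • x = σiB n k * x * σB n k := rfl

theorem σB_mul_comm (hij : i + 1 < j) : σB n i * σB n j = σB n j * σB n i := by
  by_cases h : 1 ≤ i ∧ j ≤ n - 1
  · exact mk_eq_mk_of_tbRel (tbRel.sig_comm i j h.1 hij h.2)
  · obtain hi | hj : ¬(1 ≤ i ∧ i ≤ n - 1) ∨ ¬(1 ≤ j ∧ j ≤ n - 1) := by omega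
    · simp [σB, wσ, hi]
    · simp [σB, wσ, hj]

theorem σConj_smul_comm (hij : i + 1 < j ∨ j + 1 < i) (x : TB n) :
    σConj n i • σConj n j • x = σConj n j • σConj n i • x := by
  have hcomm : σUnit n i * σUnit n j = σUnit n j * σUnit n i := by
    ext
    exact hij.elim σB_mul_comm fun h => (σB_mul_comm h).symm
  rw [← mul_smul, ← mul_smul]
  exact congrArg (ConjAct.toConjAct · • x) hcomm

theorem σConj_smul_braid (hi : 1 ≤ i) (hin : i + 1 < n) (x : TB n) :
    σConj n i • σConj n (i + 1) • σConj n i • x =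
      σConj n (i + 1) • σConj n i • σConj n (i + 1) • x := by
  have hbraid : σUnit n i * σUnit n (i + 1) * σUnit n i =
      σUnit n (i + 1) * σUnit n i * σUnit n (i + 1) := by
    ext
    exact mk_eq_mk_of_tbRel (tbRel.sig_braid i hi (by omega))
  simp only [← mul_smul, ← mul_assoc]
  exact congrArg (ConjAct.toConjAct · • x) hbraid

theorem ηB_mul_self (n i : ℕ) : ηB n i * ηB n i = ηB n i := by
  by_cases hi : 1 ≤ i ∧ i ≤ n - 1
  · exact mk_eq_mk_of_tbRel (tbRel.eta_idem i hi.1 hi.2)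
  · simp [ηB, wη, hi]

theorem σConj_smul_ηB_self (n i : ℕ) : σConj n i • ηB n i = ηB n i := by
  refine toConjAct_smul_eq_iff.2 (Eq.symm ?_)
  by_cases hi : 1 ≤ i ∧ i ≤ n - 1
  · exact mk_eq_mk_of_tbRel (tbRel.eta_sig i hi.1 hi.2)
  · simp [σUnit, σB, ηB, wσ, wη, hi]

theorem σConj_smul_ηB_of_far (hik : i + 1 < k ∨ k + 1 < i) : σConj n k • ηB n i = ηB n i := by
  refine toConjAct_smul_eq_iff.2 (Eq.symm ?_)
  by_cases hi : 1 ≤ i ∧ i ≤ n - 1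
  · by_cases hk : 1 ≤ k ∧ k ≤ n - 1
    · exact mk_eq_mk_of_tbRel (tbRel.eta_sig_far i k hi.1 hi.2 hk.1 hk.2 hik)
    · simp [σUnit, σB, wσ, hk]
  · simp [ηB, wη, hi]

theorem σConj_smul_σConj_smul_ηB (hi : 1 ≤ i) (hin : i < n) (hj : 1 ≤ j) (hjn : j < n)
    (hij : j = i + 1 ∨ i = j + 1) : σConj n j • σConj n i • ηB n j = ηB n i := by
  rw [← mul_smul]
  refine toConjAct_smul_eq_iff (u := σUnit n j * σUnit n i).2 (Eq.symm ?_)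
  rw [Units.val_mul, ← mul_assoc]
  exact mk_eq_mk_of_tbRel (tbRel.eta_sig_sig i j hi (Nat.le_sub_one_of_lt hin) hj
    (Nat.le_sub_one_of_lt hjn) hij)

theorem σConj_smul_σConj_inv_smul_ηB (hi : 1 ≤ i) (hin : i < n) (hj : 1 ≤ j) (hjn : j < n)
    (hij : j = i + 1 ∨ i = j + 1) : σConj n j • (σConj n i)⁻¹ • ηB n j = ηB n i := by
  rw [← mul_smul]
  refine toConjAct_smul_eq_iff (u := σUnit n j * (σUnit n i)⁻¹).2 (Eq.symm ?_)
  rw [Units.val_mul, ← mul_assoc]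
  exact mk_eq_mk_of_tbRel (tbRel.eta_sig_sigInv i j hi (Nat.le_sub_one_of_lt hin) hj
    (Nat.le_sub_one_of_lt hjn) hij)

theorem σConj_smul_smul_ηB_of_adjacent (hi : 1 ≤ i) (hin : i < n) (hj : 1 ≤ j) (hjn : j < n)
    (hij : j = i + 1 ∨ i = j + 1) : σConj n i • σConj n i • ηB n j = ηB n j := by
  have h : σConj n i • ηB n j = (σConj n i)⁻¹ • ηB n j := by
    rw [← smul_left_cancel_iff (σConj n j), σConj_smul_σConj_smul_ηB hi hin hj hjn hij,
      σConj_smul_σConj_inv_smul_ηB hi hin hj hjn hij]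
  rw [h, smul_inv_smul]

theorem σConj_smul_ηB_comm_of_adjacent (hi : 1 ≤ i) (hin : i < n) (hj : 1 ≤ j) (hjn : j < n)
    (hij : j = i + 1 ∨ i = j + 1) : σConj n i • ηB n j = σConj n j • ηB n i := by
  rw [← smul_left_cancel_iff (σConj n j), σConj_smul_σConj_smul_ηB hi hin hj hjn hij,
    σConj_smul_smul_ηB_of_adjacent hj hjn hi hin hij.symm]

theorem σConj_smul_φB (hk : 2 ≤ k) : σConj n k • φB n = φB n := by
  refine toConjAct_smul_eq_iff.2 (Eq.symm ?_)
  by_cases hkn : k ≤ n - 1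
  · exact mk_eq_mk_of_tbRel (tbRel.phi_sig k hk hkn)
  · simp [σUnit, σB, wσ, hkn]

end Generators

section StrandTies

variable {n i j k : ℕ}

theorem ηg_self (n i : ℕ) : ηg n i i = 1 := by
  simp [ηg, wηg]

theorem ηg_comm (n i j : ℕ) : ηg n i j = ηg n j i := by
  simp only [ηg, wηg, min_comm i j, max_comm i j, eq_comm (a := i)]

theorem ηg_succ_right (hi : 1 ≤ i) : ηg n i (i + 1) = ηB n i := by
  have hlen : i + 1 - 2 + 1 - i = 0 := by omega
  simp only [ηg, wηg, wσRange, wσiRangeRev, ηB, min_eq_left i.le_succ, max_eq_right i.le_succ, hlen]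
  simp

theorem σConj_smul_ηg_succ_left (hij : i + 1 < j) :
    σConj n i • ηg n (i + 1) j = ηg n i j := by
  have hlen : j - 2 + 1 - i = (j - 2 + 1 - (i + 1)) + 1 := by omega
  simp only [ηg, wηg, hij.ne, (Nat.lt_of_succ_lt hij).ne, min_eq_left_of_lt hij,
    max_eq_right_of_lt hij, min_eq_left_of_lt (Nat.lt_of_succ_lt hij),
    max_eq_right_of_lt (Nat.lt_of_succ_lt hij), if_false, wσRange, wσiRangeRev]
  rw [hlen, List.range'_succ]
  simp only [List.map_cons, List.prod_cons, List.reverse_cons, List.map_append, List.prod_append,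
    List.map_nil, List.prod_nil, mul_one, map_mul, σConj_smul, σB, σiB, mul_assoc]

theorem σConj_smul_ηg_of_outside (hi : 1 ≤ i) (hij : i < j) (hk : k + 1 < i ∨ j < k) :
    σConj n k • ηg n i j = ηg n i j := by
  obtain ⟨l, rfl⟩ := Nat.exists_eq_add_one_of_ne_zero (Nat.ne_zero_of_lt hij)
  induction Nat.le_of_lt_succ hij using Nat.decreasingInduction with
  | self => rw [ηg_succ_right hi, σConj_smul_ηB_of_far (by omega)]
  | of_succ i hil ih =>
    rw [← σConj_smul_ηg_succ_left (by omega), σConj_smul_comm (by omega),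
      ih (by omega) (by omega) (by omega)]

theorem σConj_smul_ηg_of_inside (hi : 1 ≤ i) (hik : i < k) (hkj : k + 1 < j) (hjn : j ≤ n) :
    σConj n k • ηg n i j = ηg n i j := by
  obtain ⟨l, rfl⟩ := Nat.exists_eq_add_one_of_ne_zero (Nat.ne_zero_of_lt hik)
  induction Nat.le_of_lt_succ hik using Nat.decreasingInduction with
  | self =>
    rw [← σConj_smul_ηg_succ_left (i := l) (by omega), ← σConj_smul_ηg_succ_left (by omega),
      ← σConj_smul_braid hi (by omega),
      σConj_smul_ηg_of_outside (by omega) (by omega) (by omega)]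
  | of_succ i hil ih =>
    rw [← σConj_smul_ηg_succ_left (by omega), σConj_smul_comm (by omega),
      ih (by omega) (by omega)]

theorem σConj_smul_smul_ηg_succ_left (hi : 1 ≤ i) (hij : i + 1 < j) (hjn : j ≤ n) :
    σConj n i • σConj n i • ηg n (i + 1) j = ηg n (i + 1) j := by
  obtain ⟨l, rfl⟩ : ∃ l, j = l + 2 := Nat.exists_eq_add_of_le' (by omega)
  induction (by omega : i ≤ l) using Nat.decreasingInduction with
  | self =>
    rw [ηg_succ_right (by omega),
      σConj_smul_smul_ηB_of_adjacent hi (by omega) (by omega) (by omega) (by omega)]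
  | of_succ i hil ih =>
    have hfix : σConj n i • ηg n (i + 2) (l + 2) = ηg n (i + 2) (l + 2) :=
      σConj_smul_ηg_of_outside (by omega) (by omega) (by omega)
    have hinvol := ih (by omega) (by omega)
    rw [← σConj_smul_ηg_succ_left (i := i + 1) (by omega)]
    generalize ηg n (i + 2) (l + 2) = x at hfix hinvol ⊢
    calc σConj n i • σConj n i • σConj n (i + 1) • x
        = σConj n i • σConj n i • σConj n (i + 1) • σConj n i • x := by rw [hfix]
      _ = σConj n (i + 1) • σConj n i • σConj n (i + 1) • σConj n (i + 1) • x := by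
          rw [σConj_smul_braid hi (by omega), σConj_smul_braid hi (by omega)]
      _ = σConj n (i + 1) • x := by rw [hinvol, hfix]

theorem σConj_smul_ηg_left (hi : 1 ≤ i) (hij : i + 1 < j) (hjn : j ≤ n) :
    σConj n i • ηg n i j = ηg n (i + 1) j := by
  rw [← σConj_smul_ηg_succ_left hij, σConj_smul_smul_ηg_succ_left hi hij hjn]

theorem σConj_smul_ηg_right (hi : 1 ≤ i) (hij : i < j) (hjn : j < n) :
    σConj n j • ηg n i j = ηg n i (j + 1) := by
  obtain ⟨l, rfl⟩ := Nat.exists_eq_add_one_of_ne_zero (Nat.ne_zero_of_lt hij)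
  induction Nat.le_of_lt_succ hij using Nat.decreasingInduction with
  | self =>
    rw [ηg_succ_right hi, ← σConj_smul_ηg_succ_left (by omega), ηg_succ_right (by omega),
      σConj_smul_ηB_comm_of_adjacent (by omega) hjn hi (by omega) (by omega)]
  | of_succ i hil ih =>
    rw [← σConj_smul_ηg_succ_left (by omega), σConj_smul_comm (by omega),
      ih (by omega) (by omega), σConj_smul_ηg_succ_left (by omega)]

theorem σConj_smul_ηg_succ_right (hi : 1 ≤ i) (hij : i < j) (hjn : j < n) :
    σConj n j • ηg n i (j + 1) = ηg n i j := by
  obtain ⟨l, rfl⟩ := Nat.exists_eq_add_one_of_ne_zero (Nat.ne_zero_of_lt hij)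
  induction Nat.le_of_lt_succ hij using Nat.decreasingInduction with
  | self =>
    rw [← σConj_smul_ηg_succ_left (by omega), ηg_succ_right (by omega),
      σConj_smul_σConj_smul_ηB hi (by omega) (by omega) hjn (by omega), ηg_succ_right hi]
  | of_succ i hil ih =>
    rw [← σConj_smul_ηg_succ_left (by omega), σConj_smul_comm (by omega),
      ih (by omega) (by omega), σConj_smul_ηg_succ_left (by omega)]

theorem σConj_smul_ηg_eq_swap_of_lt (hi : 1 ≤ i) (hij : i < j) (hjn : j ≤ n) (hkn : k < n) :
    σConj n k • ηg n i j = ηg n (swap k (k + 1) i) (swap k (k + 1) j) := by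
  obtain hout | rfl | ⟨rfl, rfl | hlt⟩ | ⟨hik, hkj⟩ | ⟨hik, rfl⟩ | rfl :
      (k + 1 < i ∨ j < k) ∨ i = k + 1 ∨ (k = i ∧ (j = i + 1 ∨ i + 1 < j)) ∨
        (i < k ∧ k + 1 < j) ∨ (i < k ∧ j = k + 1) ∨ k = j := by omega
  · rw [swap_apply_of_ne_of_ne (by omega) (by omega), swap_apply_of_ne_of_ne (by omega) (by omega),
      σConj_smul_ηg_of_outside hi hij hout]
  · rw [swap_apply_right, swap_apply_of_ne_of_ne (by omega) (by omega),
      σConj_smul_ηg_succ_left hij]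
  · rw [swap_apply_left, swap_apply_right, ηg_comm n (k + 1), ηg_succ_right hi,
      σConj_smul_ηB_self]
  · rw [swap_apply_left, swap_apply_of_ne_of_ne (by omega) (by omega),
      σConj_smul_ηg_left hi hlt hjn]
  · rw [swap_apply_of_ne_of_ne (by omega) (by omega), swap_apply_of_ne_of_ne (by omega) (by omega),
      σConj_smul_ηg_of_inside hi hik hkj hjn]
  · rw [swap_apply_right, swap_apply_of_ne_of_ne (by omega) (by omega),
      σConj_smul_ηg_succ_right hi hik hkn]
  · rw [swap_apply_left, swap_apply_of_ne_of_ne (by omega) (by omega),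
      σConj_smul_ηg_right hi hij hkn]

theorem σConj_smul_ηg_eq_swap (hi : 1 ≤ i) (hin : i ≤ n) (hj : 1 ≤ j) (hjn : j ≤ n) (hkn : k < n) :
    σConj n k • ηg n i j = ηg n (swap k (k + 1) i) (swap k (k + 1) j) := by
  rcases lt_trichotomy i j with hij | rfl | hji
  · exact σConj_smul_ηg_eq_swap_of_lt hi hij hjn hkn
  · rw [ηg_self, ηg_self, smul_one]
  · rw [ηg_comm, σConj_smul_ηg_eq_swap_of_lt hj hji hin hkn, ηg_comm]

end StrandTies

section FixedStrandTies

variable {n j k : ℕ}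

theorem φg_one (n : ℕ) : φg n 1 = φB n := by
  simp [φg, wφg, wσDesc, wσiAsc, φB]

theorem σConj_smul_φg_self (hj : 1 ≤ j) : σConj n j • φg n j = φg n (j + 1) := by
  obtain ⟨l, rfl⟩ := Nat.exists_eq_add_of_le' hj
  simp only [φg, wφg, Nat.add_sub_cancel, wσDesc, wσiAsc, map_mul, σConj_smul, σB, σiB, mul_assoc]

theorem φg_eq_mk_wσiDesc (hj : 1 ≤ j) (hjn : j ≤ n) :
    φg n j = mk n (wσiDesc n (j - 1) * wφ n * wσAsc n (j - 1)) := by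
  obtain rfl | hj := hj.eq_or_lt
  · rfl
  · exact mk_eq_mk_of_tbRel (tbRel.phi_move j hj hjn)

theorem σConj_inv_smul_φg (hj : 1 ≤ j) (hjn : j < n) :
    (σConj n j)⁻¹ • φg n j = φg n (j + 1) := by
  rw [φg_eq_mk_wσiDesc hj hjn.le, φg_eq_mk_wσiDesc j.succ_pos hjn, Nat.succ_eq_add_one]
  obtain ⟨l, rfl⟩ := Nat.exists_eq_add_of_le' hj
  simp only [Nat.add_sub_cancel, wσiDesc, wσAsc, map_mul, σConj_inv_smul, σB, σiB, mul_assoc]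

theorem σConj_smul_φg_succ (hj : 1 ≤ j) (hjn : j < n) : σConj n j • φg n (j + 1) = φg n j := by
  rw [← σConj_inv_smul_φg hj hjn, smul_inv_smul]

theorem σConj_smul_φg_of_lt (hj : 1 ≤ j) (hjk : j < k) : σConj n k • φg n j = φg n j := by
  induction j, hj using Nat.le_induction with
  | base => rw [φg_one, σConj_smul_φB hjk]
  | succ j hj ih => rw [← σConj_smul_φg_self hj, σConj_smul_comm (by omega), ih (by omega)]

theorem σConj_smul_φg_of_gt (hk : 1 ≤ k) (hkj : k + 1 < j) (hjn : j ≤ n) :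
    σConj n k • φg n j = φg n j := by
  induction j, hkj using Nat.le_induction with
  | base =>
    rw [← σConj_smul_φg_self (j := k + 1) (by omega), ← σConj_smul_φg_self hk,
      σConj_smul_braid hk hjn, σConj_smul_φg_of_lt hk (by omega)]
  | succ j hkj ih =>
    rw [← σConj_smul_φg_self (by omega), σConj_smul_comm (by omega), ih (by omega)]

theorem σConj_smul_φg_eq_swap (hj : 1 ≤ j) (hjn : j ≤ n) (hk : 1 ≤ k) (hkn : k < n) :
    σConj n k • φg n j = φg n (swap k (k + 1) j) := by
  obtain hjk | rfl | rfl | hkj : j < k ∨ j = k ∨ j = k + 1 ∨ k + 1 < j := by omega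
  · rw [swap_apply_of_ne_of_ne (by omega) (by omega), σConj_smul_φg_of_lt hj hjk]
  · rw [swap_apply_left, σConj_smul_φg_self hj]
  · rw [swap_apply_right, σConj_smul_φg_succ hk hkn]
  · rw [swap_apply_of_ne_of_ne (by omega) (by omega), σConj_smul_φg_of_gt hk hkj hjn]

end FixedStrandTies

section Relabelling

open Equiv (Perm)

/-- The relabellings of the strands that are induced on the ties by a conjugation in `TBₙᴮ`.
The label `a : Fin n` stands for the strand `a + 1`. -/
def conjPerms (n : ℕ) : Submonoid (Perm (Fin n)) where
  carrier := {π | ∃ u : ConjAct (TB n)ˣ,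
    (∀ a b : Fin n, u • ηg n (a + 1) (b + 1) = ηg n (π a + 1) (π b + 1)) ∧
      ∀ a : Fin n, u • φg n (a + 1) = φg n (π a + 1)}
  one_mem' := ⟨1, by simp⟩
  mul_mem' := by
    rintro π ρ ⟨u, hηu, hφu⟩ ⟨v, hηv, hφv⟩
    exact ⟨u * v, by simp [mul_smul, hηu, hηv], by simp [mul_smul, hφu, hφv]⟩

theorem swap_castSucc_succ_mem_conjPerms {n : ℕ} (k : Fin n) :
    swap k.castSucc k.succ ∈ conjPerms (n + 1) := by
  have hswap (a : Fin (n + 1)) :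
      (swap k.castSucc k.succ a : ℕ) + 1 = swap (k + 1 : ℕ) (k + 1 + 1) (a + 1) :=
    ((add_left_injective 1).comp Fin.val_injective).map_swap k.castSucc k.succ a
  refine ⟨σConj (n + 1) (k + 1), fun a b => ?_, fun a => ?_⟩
  · rw [hswap, hswap, σConj_smul_ηg_eq_swap] <;> omega
  · rw [hswap, σConj_smul_φg_eq_swap] <;> omega

theorem conjPerms_eq_top (n : ℕ) : conjPerms n = ⊤ := by
  cases n with
  | zero => exact Subsingleton.elim _ _
  | succ n =>
    rw [eq_top_iff, ← Perm.mclosure_swap_castSucc_succ, Submonoid.closure_le]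
    exact Set.range_subset_iff.2 swap_castSucc_succ_mem_conjPerms

theorem exists_smul_ties_eq {n r : ℕ} {s : Fin r → ℕ} (hs : Function.Injective s)
    (hsn : ∀ a, s a ∈ Set.Icc 1 n) :
    ∃ u : ConjAct (TB n)ˣ, (∀ a b : Fin r, u • ηg n (a + 1) (b + 1) = ηg n (s a) (s b)) ∧
      ∀ a : Fin r, u • φg n (a + 1) = φg n (s a) := by
  choose t ht using fun a => (⟨⟨s a - 1, by grind⟩, by grind⟩ : ∃ t : Fin n, t + 1 = s a)
  have ht_inj : Function.Injective t := fun a b hab => hs (by rw [← ht, ← ht, hab])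
  have hrn : r ≤ n := by simpa using Fintype.card_le_of_injective t ht_inj
  obtain ⟨π, hπ⟩ := Perm.exists_extending_pair _ t (Fin.castLE_injective hrn) ht_inj
  obtain ⟨u, hη, hφ⟩ : π ∈ conjPerms n := conjPerms_eq_top n ▸ Submonoid.mem_top π
  refine ⟨u, fun a b => ?_, fun a => ?_⟩
  · simpa [hπ, ht] using hη (a.castLE hrn) (b.castLE hrn)
  · simpa [hπ, ht] using hφ (a.castLE hrn)

end Relabelling

section Identities

variable {n i j k m : ℕ}

theorem ηg_one_two_mul_ηg_two_three_mul_ηg_one_three (hn : 3 ≤ n) :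
    ηg n 1 2 * ηg n 2 3 * ηg n 1 3 = ηg n 1 2 * ηg n 2 3 := by
  have hη : ηB n 1 * ηB n 2 * σB n 1 = ηB n 2 * σB n 1 * ηB n 2 :=
    mk_eq_mk_of_tbRel (tbRel.eta_eta_sig' 1 2 (by omega) (by omega) (by omega) (by omega)
      (by omega))
  have hη₁₃ : ηg n 1 3 = σB n 1 * ηB n 2 * σiB n 1 := by
    rw [← σConj_smul_ηg_succ_left (by omega), ηg_succ_right (by omega), σConj_smul]
  rw [ηg_succ_right (by omega), ηg_succ_right (by omega), hη₁₃]
  calc ηB n 1 * ηB n 2 * (σB n 1 * ηB n 2 * σiB n 1)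
      = ηB n 1 * (ηB n 2 * σB n 1 * ηB n 2) * σiB n 1 := by simp only [mul_assoc]
    _ = (ηB n 1 * ηB n 1) * ηB n 2 * (σB n 1 * σiB n 1) := by rw [← hη]; simp only [mul_assoc]
    _ = ηB n 1 * ηB n 2 := by rw [ηB_mul_self, σB_mul_σiB, mul_one]

theorem φg_one_mul_φg_two (hn : 2 ≤ n) : φg n 1 * φg n 2 = φg n 1 * ηg n 1 2 := by
  have hφη : φB n * ηB n 1 = φB n * σB n 1 * φB n * σiB n 1 :=
    mk_eq_mk_of_tbRel (tbRel.phi_eta_one hn)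
  rw [← σConj_smul_φg_self le_rfl, φg_one, ηg_succ_right le_rfl, σConj_smul, hφη]
  simp only [mul_assoc]

theorem ηg_one_two_mul_φg_one (hn : 2 ≤ n) : ηg n 1 2 * φg n 1 = φg n 1 * ηg n 1 2 := by
  rw [φg_one, ηg_succ_right le_rfl]
  exact (mk_eq_mk_of_tbRel (tbRel.phi_eta 1 le_rfl (Nat.le_sub_one_of_lt hn))).symm

theorem ηg_mul_ηg_mul_ηg (hi : i ∈ Set.Icc 1 n) (hk : k ∈ Set.Icc 1 n) (hm : m ∈ Set.Icc 1 n)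
    (hik : i ≠ k) (hkm : k ≠ m) (him : i ≠ m) :
    ηg n i k * ηg n k m * ηg n i m = ηg n i k * ηg n k m := by
  obtain ⟨u, hη, -⟩ := exists_smul_ties_eq (n := n) (s := ![i, k, m])
    (by simp [Function.Injective, Fin.forall_fin_succ, *, Ne.symm])
    (by simpa [Fin.forall_fin_succ] using ⟨hi, hk, hm⟩)
  have hik' : u • ηg n 1 2 = ηg n i k := hη 0 1
  have hkm' : u • ηg n 2 3 = ηg n k m := hη 1 2
  have him' : u • ηg n 1 3 = ηg n i m := hη 0 2
  rw [← hik', ← hkm', ← him', ← smul_mul', ← smul_mul',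
    ηg_one_two_mul_ηg_two_three_mul_ηg_one_three (by grind)]

theorem exists_smul_ties_eq_pair (hi : i ∈ Set.Icc 1 n) (hj : j ∈ Set.Icc 1 n) (hij : i ≠ j) :
    ∃ u : ConjAct (TB n)ˣ,
      u • ηg n 1 2 = ηg n i j ∧ u • φg n 1 = φg n i ∧ u • φg n 2 = φg n j := by
  obtain ⟨u, hη, hφ⟩ := exists_smul_ties_eq (n := n) (s := ![i, j])
    (by simp [Function.Injective, Fin.forall_fin_succ, hij, hij.symm])
    (by simpa [Fin.forall_fin_succ] using ⟨hi, hj⟩)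
  exact ⟨u, hη 0 1, hφ 0, hφ 1⟩

theorem ηg_mul_self (hi : i ∈ Set.Icc 1 n) (hj : j ∈ Set.Icc 1 n) (hij : i ≠ j) :
    ηg n i j * ηg n i j = ηg n i j := by
  obtain ⟨u, hη, -, -⟩ := exists_smul_ties_eq_pair hi hj hij
  rw [← hη, ← smul_mul', ηg_succ_right le_rfl, ηB_mul_self]

theorem φg_mul_φg (hi : i ∈ Set.Icc 1 n) (hj : j ∈ Set.Icc 1 n) (hij : i ≠ j) :
    φg n i * φg n j = φg n i * ηg n i j := by
  obtain ⟨u, hη, hφi, hφj⟩ := exists_smul_ties_eq_pair hi hj hij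
  rw [← hη, ← hφi, ← hφj, ← smul_mul', ← smul_mul', φg_one_mul_φg_two (by grind)]

theorem ηg_mul_φg (hi : i ∈ Set.Icc 1 n) (hj : j ∈ Set.Icc 1 n) (hij : i ≠ j) :
    ηg n i j * φg n i = φg n i * ηg n i j := by
  obtain ⟨u, hη, hφ, -⟩ := exists_smul_ties_eq_pair hi hj hij
  rw [← hη, ← hφ, ← smul_mul', ← smul_mul', ηg_one_two_mul_φg_one (by grind)]

theorem φg_mul_φg_mul_ηg (hi : i ∈ Set.Icc 1 n) (hj : j ∈ Set.Icc 1 n) (hij : i ≠ j) :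
    φg n i * φg n j * ηg n i j = φg n i * φg n j := by
  rw [φg_mul_φg hi hj hij, mul_assoc, ηg_mul_self hi hj hij]

theorem ηg_mul_φg_mul_φg (hi : i ∈ Set.Icc 1 n) (hj : j ∈ Set.Icc 1 n) (hij : i ≠ j) :
    ηg n i j * φg n i * φg n j = ηg n i j * φg n i := by
  rw [mul_assoc, φg_mul_φg hi hj hij, ← ηg_mul_φg hi hj hij, ← mul_assoc, ηg_mul_self hi hj hij]

end Identities

end TiedBraidB

open TiedBraidB in
/-- In `TBₙᴮ`, ties induce a transitive relation on the strands:
for pairwise distinct `i, k, m ∈ {1, …, n}`, `η_{i,k} η_{k,m} η_{i,m} = η_{i,k} η_{k,m}`;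
and for `i ≠ j` in `{1, …, n}`, `φᵢ φⱼ η_{i,j} = φᵢ φⱼ` and `η_{i,j} φᵢ φⱼ = η_{i,j} φᵢ`. -/
theorem ties_transitivity_absorption (n : ℕ) :
    (∀ (i k m : ℕ) (_hi1 : 1 ≤ i) (_hi2 : i ≤ n) (_hk1 : 1 ≤ k) (_hk2 : k ≤ n)
        (_hm1 : 1 ≤ m) (_hm2 : m ≤ n) (_hik : i ≠ k) (_hkm : k ≠ m) (_him : i ≠ m),
      ηg n i k * ηg n k m * ηg n i m = ηg n i k * ηg n k m) ∧
    (∀ (i j : ℕ) (_hi1 : 1 ≤ i) (_hi2 : i ≤ n) (_hj1 : 1 ≤ j) (_hj2 : j ≤ n) (_hij : i ≠ j),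
      φg n i * φg n j * ηg n i j = φg n i * φg n j ∧
      ηg n i j * φg n i * φg n j = ηg n i j * φg n i) := by
  constructor
  · intro i k m hi hin hk hkn hm hmn hik hkm him
    exact ηg_mul_ηg_mul_ηg ⟨hi, hin⟩ ⟨hk, hkn⟩ ⟨hm, hmn⟩ hik hkm him
  · intro i j hi hin hj hjn hij
    exact ⟨φg_mul_φg_mul_ηg ⟨hi, hin⟩ ⟨hj, hjn⟩ hij, ηg_mul_φg_mul_φg ⟨hi, hin⟩ ⟨hj, hjn⟩ hij⟩
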